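/- Let p be a prime and G a finite abelian group of order coprime to p. Then every finitely generated ℤ_p[G]-module M is isomorphic to a finite direct sum ⊕_{i=1}^{t} ℤ_p[G]/I_i for some ideals I_1 ⊆ I_2 ⊆ ⋯ ⊆ I_t of ℤ_p[G]. -/

import Mathlib

/-!
Let `O` be `ℤ_p`, or any Dedekind domain with finitely many maximal ideals in which `|G|` is
invertible, and let `K` be its fraction field. If `x ∈ K[G]` is integral over `O`, then so is the
trace of `x * g⁻¹`, which is `|G|` times the coefficient of `x` at `g`; as `|G|` is a unit, `O[G]`
is the integral closure of `O` in `K[G]`. By Maschke's theorem `K[G]` is a finite product of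
fields, so `O[G]` is a finite product of integral closures of `O` in fields, each a Dedekind domain
with finitely many maximal ideals, hence a principal ideal domain. Over such a product, elementary
divisors at different primes or in different factors generate coprime ideals; so the chains at the
individual primes, padded by the unit ideal to a common length, are merged by the Chinese remainder
theorem.
-/

section LinearEquiv

/-- Exchanging the two indices of a doubly indexed product, as a linear equivalence. -/
def piCommLinearEquiv (R : Type*) [Semiring R] {ι κ : Type*} (N : κ → ι → Type*)
    [∀ k i, AddCommMonoid (N k i)] [∀ k i, Module R (N k i)] :
    (∀ k i, N k i) ≃ₗ[R] ∀ i k, N k i where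
  __ := Equiv.piComm N
  map_add' _ _ := rfl
  map_smul' _ _ := rfl

theorem nonempty_pi_equiv_pi_fiber (R : Type*) [Semiring R] {ι κ : Type*} (N : ι → Type*)
    [∀ i, AddCommMonoid (N i)] [∀ i, Module R (N i)] (f : ι → κ) :
    Nonempty ((∀ i, N i) ≃ₗ[R] ∀ (k : κ) (i : {i // f i = k}), N i) :=
  ⟨(LinearEquiv.piCongrLeft R N (Equiv.sigmaFiberEquiv f)).symm.trans <|
    LinearEquiv.piCurry R fun k (i : {i // f i = k}) ↦ N i⟩

theorem nonempty_pi_tensorProduct_equiv (R M : Type*) [CommRing R] [AddCommGroup M] [Module R M]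
    {κ : Type*} [Finite κ] (D : κ → Type*) [∀ k, CommRing (D k)] [∀ k, Algebra R (D k)]
    (hD : Function.Bijective (algebraMap R (∀ k, D k))) :
    Nonempty (M ≃ₗ[R] ∀ k, TensorProduct R (D k) M) := by
  classical
  have := Fintype.ofFinite κ
  have eD : R ≃ₗ[R] ∀ k, D k := LinearEquiv.ofBijective (Algebra.linearMap R (∀ k, D k)) hD
  exact ⟨(TensorProduct.rid R M).symm.trans <| (eD.lTensor M).trans <|
    (TensorProduct.piRight R R M D).trans <|
      LinearEquiv.piCongrRight fun k ↦ TensorProduct.comm R M (D k)⟩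

end LinearEquiv

section InvariantFactors

variable {R : Type*} [CommRing R]

/-- An `R`-module has invariant factors if it is isomorphic to a finite direct sum of cyclic modules
`R ⧸ I i` along an increasing chain of ideals `I i`; the ideals may be `⊥` or `⊤`. -/
def HasInvariantFactors (R M : Type*) [CommRing R] [AddCommGroup M] [Module R M] : Prop :=
  ∃ (t : ℕ) (I : Fin t → Ideal R), Monotone I ∧ Nonempty (M ≃ₗ[R] ∀ i, R ⧸ I i)

theorem HasInvariantFactors.of_equiv {M N : Type*} [AddCommGroup M] [Module R M] [AddCommGroup N]
    [Module R N] (e : M ≃ₗ[R] N) (hN : HasInvariantFactors R N) : HasInvariantFactors R M :=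
  let ⟨t, I, hI, ⟨f⟩⟩ := hN
  ⟨t, I, hI, ⟨e.trans f⟩⟩

theorem exists_equiv_fin_monotone {ι α : Type*} [Finite ι] [PartialOrder α] {f : ι → α}
    (hf : ∀ i j, f i ≤ f j ∨ f j ≤ f i) {t : ℕ} (ht : Nat.card ι = t) :
    ∃ e : Fin t ≃ ι, Monotone (f ∘ e) := by
  classical
  have hchain : IsChain (· ≤ ·) (Set.range f) := by
    rintro _ ⟨i, rfl⟩ _ ⟨j, rfl⟩ -
    exact hf i j
  let := hchain.linearOrder
  let e := (Finite.equivFinOfCardEq ht).symm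
  let g : Fin t → Set.range f := Set.rangeFactorization f ∘ e
  exact ⟨(Tuple.sort g).trans e, fun i j hij ↦ Tuple.monotone_sort g hij⟩

theorem exists_monotone_pi_quotient_equiv {ι : Type*} [Finite ι] {K : ι → Ideal R}
    (hK : ∀ i j, K i ≤ K j ∨ K j ≤ K i) {t : ℕ} (ht : Nat.card ι ≤ t) :
    ∃ I : Fin t → Ideal R, Monotone I ∧ (∀ i, I i = ⊤ ∨ I i ∈ Set.range K) ∧
      Nonempty ((∀ i, R ⧸ K i) ≃ₗ[R] ∀ i, R ⧸ I i) := by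
  let K' : ι ⊕ Fin (t - Nat.card ι) → Ideal R := Sum.elim K fun _ ↦ ⊤
  have hK' : ∀ i j, K' i ≤ K' j ∨ K' j ≤ K' i := by
    rintro (i | i) (j | j)
    · exact hK i j
    all_goals simp [K']
  obtain ⟨e, he⟩ := exists_equiv_fin_monotone hK' (t := t) (by simp [ht])
  have pad : (∀ i, R ⧸ K i) ≃ₗ[R] ∀ i, R ⧸ K' i :=
    (LinearEquiv.prodUnique (M₂ := ∀ _ : Fin (t - Nat.card ι), R ⧸ (⊤ : Ideal R))).symm.trans
      (LinearEquiv.sumPiEquivProdPi R _ _ fun i ↦ R ⧸ K' i).symm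
  refine ⟨K' ∘ e, he, fun i ↦ ?_,
    ⟨pad.trans (LinearEquiv.piCongrLeft R (fun i ↦ R ⧸ K' i) e).symm⟩⟩
  rw [Function.comp_apply]
  rcases e i with j | j
  · exact Or.inr ⟨j, rfl⟩
  · exact Or.inl rfl

theorem HasInvariantFactors.prod_left {N ι : Type*} [Finite ι] [AddCommGroup N] [Module R N]
    (hN : HasInvariantFactors R N) : HasInvariantFactors R ((ι → R) × N) := by
  obtain ⟨t, I, hI, ⟨e⟩⟩ := hN
  let K : ι ⊕ Fin t → Ideal R := Sum.elim (fun _ ↦ ⊥) I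
  have hK : ∀ i j, K i ≤ K j ∨ K j ≤ K i := by
    rintro (i | i) (j | j)
    · simp [K]
    · simp [K]
    · simp [K]
    · exact (le_total i j).imp (@hI _ _) (@hI _ _)
  obtain ⟨I', hI', -, ⟨f⟩⟩ := exists_monotone_pi_quotient_equiv hK le_rfl
  have eι : (ι → R) ≃ₗ[R] ∀ i : ι, R ⧸ K (.inl i) :=
    LinearEquiv.piCongrRight fun _ ↦ (Submodule.quotEquivOfEqBot _ rfl).symm
  exact ⟨_, I', hI', ⟨(eι.prodCongr e).trans
    ((LinearEquiv.sumPiEquivProdPi R _ _ fun i ↦ R ⧸ K i).symm.trans f)⟩⟩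

theorem nonempty_quotient_iInf_equiv_pi {κ : Type*} [Finite κ] {I : κ → Ideal R}
    (hI : Pairwise (Function.onFun IsCoprime I)) :
    Nonempty ((R ⧸ ⨅ k, I k) ≃ₗ[R] ∀ k, R ⧸ I k) := by
  have hker : LinearMap.ker (LinearMap.pi fun k ↦ (I k).mkQ) = ⨅ k, I k := by
    simp only [LinearMap.ker_pi, Submodule.ker_mkQ]
  exact ⟨(Submodule.quotEquivOfEq _ _ hker.symm).trans
    (LinearMap.quotKerEquivOfSurjective _ (Ideal.pi_mkQ_surjective hI))⟩

theorem hasInvariantFactors_pi_quotient {κ : Type*} [Finite κ] {ι : κ → Type*} [∀ k, Finite (ι k)]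
    {K : ∀ k, ι k → Ideal R} (hle : ∀ k i j, K k i ≤ K k j ∨ K k j ≤ K k i)
    (hcop : ∀ k l, k ≠ l → ∀ i j, IsCoprime (K k i) (K l j)) :
    HasInvariantFactors R (∀ k i, R ⧸ K k i) := by
  obtain ⟨t, ht⟩ := (Set.finite_range fun k ↦ Nat.card (ι k)).bddAbove
  choose I hI hmem e using fun k ↦
    exists_monotone_pi_quotient_equiv (hle k) (ht ⟨k, rfl⟩)
  have hcopI (i : Fin t) : Pairwise (Function.onFun IsCoprime fun k ↦ I k i) := by
    intro k l hkl
    change IsCoprime (I k i) (I l i)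
    obtain hk | ⟨a, ha⟩ := hmem k i
    · rw [hk, ← Ideal.one_eq_top]
      exact isCoprime_one_left
    obtain hl | ⟨b, hb⟩ := hmem l i
    · rw [hl, ← Ideal.one_eq_top]
      exact isCoprime_one_right
    rw [← ha, ← hb]
    exact hcop k l hkl a b
  refine ⟨t, fun i ↦ ⨅ k, I k i, fun i j hij ↦ iInf_mono fun k ↦ hI k hij, ⟨?_⟩⟩
  exact (LinearEquiv.piCongrRight fun k ↦ (e k).some).trans <|
    (piCommLinearEquiv R _).trans <| LinearEquiv.piCongrRight fun i ↦
      (nonempty_quotient_iInf_equiv_pi (hcopI i)).some.symm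

theorem hasInvariantFactors_pi_quotient_pow {ι : Type*} [Finite ι] {P : ι → Ideal R}
    (hP : ∀ i, (P i).IsMaximal) (e : ι → ℕ) :
    HasInvariantFactors R (∀ i, R ⧸ P i ^ e i) := by
  obtain ⟨g⟩ := nonempty_pi_equiv_pi_fiber R (fun i ↦ R ⧸ P i ^ e i) (Set.rangeFactorization P)
  have hfiber (k : Set.range P) (i : {i // Set.rangeFactorization P i = k}) : P i = k.1 :=
    congrArg Subtype.val i.2
  refine .of_equiv g (hasInvariantFactors_pi_quotient (fun k i j ↦ ?_) fun k l hkl i j ↦ ?_)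
  · rw [hfiber k i, hfiber k j]
    exact (le_total (e j) (e i)).imp Ideal.pow_le_pow_right Ideal.pow_le_pow_right
  · have hne : P i ≠ P j := by
      rw [hfiber k i, hfiber l j]
      exact Subtype.coe_ne_coe.mpr hkl
    have := hP i
    have := hP j
    exact (Ideal.isCoprime_of_isMaximal hne).pow

theorem hasInvariantFactors_of_isPrincipalIdealRing [IsDomain R] [IsPrincipalIdealRing R]
    (M : Type*) [AddCommGroup M] [Module R M] [Module.Finite R M] : HasInvariantFactors R M := by
  classical
  obtain ⟨n, ι, _, p, hp, e, ⟨f⟩⟩ := Module.equiv_free_prod_directSum R M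
  refine .of_equiv (f.trans <| (Finsupp.linearEquivFunOnFinite R R (Fin n)).prodCongr
    (DirectSum.linearEquivFunOnFintype R ι _)) (.prod_left ?_)
  have hspan (i : ι) : (R ∙ p i ^ e i) = (R ∙ p i) ^ e i := (Ideal.span_singleton_pow _ _).symm
  exact .of_equiv (LinearEquiv.piCongrRight fun i ↦ Submodule.quotEquivOfEq _ _ (hspan i)) <|
    hasInvariantFactors_pi_quotient_pow
      (fun i ↦ PrincipalIdealRing.isMaximal_of_irreducible (hp i)) e

theorem nonempty_quotient_comap_equiv {S : Type*} [CommRing S] [Algebra R S]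
    (hS : Function.Surjective (algebraMap R S)) (I : Ideal S) :
    Nonempty ((S ⧸ I) ≃ₗ[R] R ⧸ I.comap (algebraMap R S)) := by
  have hker : RingHom.ker (Algebra.ofId R (S ⧸ I)) = I.comap (algebraMap R S) := by
    ext r
    exact Ideal.Quotient.eq_zero_iff_mem
  have hsurj : Function.Surjective (Algebra.ofId R (S ⧸ I)) :=
    Ideal.Quotient.mk_surjective.comp hS
  exact ⟨(Ideal.quotientKerAlgEquivOfSurjective hsurj).symm.toLinearEquiv.trans
    (Submodule.quotEquivOfEq _ _ hker)⟩

theorem isCoprime_comap_comap {κ : Type*} {D : κ → Type*} [∀ k, CommRing (D k)]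
    [∀ k, Algebra R (D k)] (hD : Function.Surjective (algebraMap R (∀ k, D k))) {k l : κ}
    (hkl : k ≠ l) (I : Ideal (D k)) (J : Ideal (D l)) :
    IsCoprime (I.comap (algebraMap R (D k))) (J.comap (algebraMap R (D l))) := by
  classical
  obtain ⟨r, hr⟩ := hD (Pi.single k 1)
  have hrk : algebraMap R (D k) r = 1 := (congrFun hr k).trans (Pi.single_eq_same k 1)
  have hrl : algebraMap R (D l) r = 0 := (congrFun hr l).trans (Pi.single_eq_of_ne hkl.symm 1)
  refine Ideal.isCoprime_iff_exists.mpr ⟨1 - r, ?_, r, ?_, sub_add_cancel 1 r⟩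
  · simp [Ideal.mem_comap, hrk]
  · simp [Ideal.mem_comap, hrl]

theorem hasInvariantFactors_of_bijective_algebraMap_pi {M : Type*} [AddCommGroup M] [Module R M]
    {κ : Type*} [Finite κ] (D : κ → Type*) [∀ k, CommRing (D k)] [∀ k, Algebra R (D k)]
    (hD : Function.Bijective (algebraMap R (∀ k, D k)))
    (hM : ∀ k, HasInvariantFactors (D k) (TensorProduct R (D k) M)) :
    HasInvariantFactors R M := by
  obtain ⟨e⟩ := nonempty_pi_tensorProduct_equiv R M D hD
  choose t I hI f using hM
  have hsurj (k : κ) : Function.Surjective (algebraMap R (D k)) :=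
    (Function.surjective_eval k).comp hD.surjective
  refine .of_equiv (e.trans <| LinearEquiv.piCongrRight fun k ↦
    ((f k).some.restrictScalars R).trans <| LinearEquiv.piCongrRight fun i ↦
      (nonempty_quotient_comap_equiv (hsurj k) (I k i)).some) ?_
  refine hasInvariantFactors_pi_quotient (fun k i j ↦ ?_) fun k l hkl i j ↦
    isCoprime_comap_comap hD.surjective hkl _ _
  exact (le_total i j).imp (fun h ↦ Ideal.comap_mono (hI k h)) fun h ↦ Ideal.comap_mono (hI k h)

end InvariantFactors

section IntegralTrace

variable {O K : Type*} [CommRing O] [Field K] [Algebra O K]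

theorem isIntegral_of_mem_spectrum {A : Type*} [Ring A] [Algebra O A] [Algebra K A]
    [IsScalarTower O K A] {a : A} (ha : IsIntegral O a) {μ : K} (hμ : μ ∈ spectrum K a) :
    IsIntegral O μ := by
  obtain ⟨f, hf, hfa⟩ := ha
  refine ⟨f, hf, ?_⟩
  have hmem := spectrum.subset_polynomial_aeval a (f.map (algebraMap O K)) ⟨μ, hμ, rfl⟩
  rw [Polynomial.aeval_map_algebraMap, Polynomial.aeval_def, hfa] at hmem
  rw [← Polynomial.eval_map]
  by_contra hne
  refine hmem (spectrum.mem_resolventSet_iff.mpr ?_)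
  rw [sub_zero]
  exact (IsUnit.mk0 _ hne).map (algebraMap K A)

theorem isIntegral_matrix_trace {n : Type*} [Fintype n] [DecidableEq n] {X : Matrix n n K}
    (hX : IsIntegral O X) : IsIntegral O X.trace := by
  let L := AlgebraicClosure K
  have hXL : IsIntegral O (X.map (algebraMap K L)) :=
    hX.map ((Algebra.ofId K L).mapMatrix.restrictScalars O)
  rw [← isIntegral_algebraMap_iff (algebraMap K L).injective,
    AddMonoidHom.map_trace (algebraMap K L), Matrix.trace_eq_sum_roots_charpoly]
  refine IsIntegral.multiset_sum fun μ hμ ↦ isIntegral_of_mem_spectrum hXL ?_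
  exact Matrix.mem_spectrum_of_isRoot_charpoly (Polynomial.isRoot_of_mem_roots hμ)

theorem isIntegral_algebra_trace {A : Type*} [CommRing A] [Algebra O A] [Algebra K A]
    [IsScalarTower O K A] [Module.Finite K A] {a : A} (ha : IsIntegral O a) :
    IsIntegral O (Algebra.trace K A a) := by
  rw [Algebra.trace_eq_matrix_trace (Module.finBasis K A)]
  exact isIntegral_matrix_trace
    (ha.map ((Algebra.leftMulMatrix (Module.finBasis K A)).restrictScalars O))

end IntegralTrace

section IntegralClosure

variable {O : Type*} [CommRing O]

theorem isIntegral_pi_single {ι : Type*} [DecidableEq ι] {F : ι → Type*} [∀ i, CommRing (F i)]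
    [∀ i, Algebra O (F i)] {i : ι} {a : F i} (ha : IsIntegral O a) :
    IsIntegral O (Pi.single i a : ∀ i, F i) := by
  obtain ⟨f, hf, hfa⟩ := ha
  refine ⟨Polynomial.X * f, Polynomial.monic_X.mul hf, ?_⟩
  rw [← Polynomial.aeval_def] at hfa ⊢
  ext j
  have hj := Polynomial.aeval_algHom_apply (Pi.evalAlgHom O F j) (Pi.single i a)
    (Polynomial.X * f)
  rw [Pi.evalAlgHom_apply, Pi.evalAlgHom_apply] at hj
  rw [← hj, map_mul, Polynomial.aeval_X, Pi.zero_apply]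
  obtain rfl | hij := eq_or_ne j i
  · rw [Pi.single_eq_same, hfa, mul_zero]
  · rw [Pi.single_eq_of_ne hij, zero_mul]

theorem isIntegral_pi_iff {ι : Type*} [Finite ι] {F : ι → Type*} [∀ i, CommRing (F i)]
    [∀ i, Algebra O (F i)] {x : ∀ i, F i} :
    IsIntegral O x ↔ ∀ i, IsIntegral O (x i) := by
  classical
  have := Fintype.ofFinite ι
  refine ⟨fun hx i ↦ hx.map (Pi.evalAlgHom O F i), fun hx ↦ ?_⟩
  rw [← Finset.univ_sum_single x]
  exact IsIntegral.sum _ fun i _ ↦ isIntegral_pi_single (hx i)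

/-- The integral closure of `O` in a finite product is the product of the integral closures of `O`
in the factors. -/
def integralClosurePiEquiv (O : Type*) [CommRing O] {ι : Type*} [Finite ι] (F : ι → Type*)
    [∀ i, CommRing (F i)] [∀ i, Algebra O (F i)] :
    integralClosure O (∀ i, F i) ≃ₐ[O] ∀ i, integralClosure O (F i) where
  toFun x i := ⟨x.1 i, isIntegral_pi_iff.mp x.2 i⟩
  invFun y := ⟨fun i ↦ y i, isIntegral_pi_iff.mpr fun i ↦ (y i).2⟩
  left_inv _ := rfl
  right_inv _ := rfl
  map_mul' _ _ := rfl
  map_add' _ _ := rfl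
  commutes' _ := rfl

theorem finite_primeSpectrum_of_finite_maximalSpectrum [IsDomain O] [Ring.DimensionLEOne O]
    [Finite (MaximalSpectrum O)] : Finite (PrimeSpectrum O) := by
  refine Finite.of_surjective
    (fun m : Option (MaximalSpectrum O) ↦ m.elim ⊥ MaximalSpectrum.toPrimeSpectrum) fun P ↦ ?_
  by_cases hP : P.asIdeal = ⊥
  · exact ⟨none, PrimeSpectrum.ext hP.symm⟩
  · exact ⟨some ⟨P.asIdeal, Ring.DimensionLEOne.maximalOfPrime hP P.isPrime⟩, rfl⟩

theorem isPrincipalIdealRing_integralClosure [IsDedekindDomain O] [Finite (MaximalSpectrum O)]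
    (K F : Type*) [Field K] [Algebra O K] [IsFractionRing O K] [Field F] [Algebra O F]
    [Algebra K F] [IsScalarTower O K F] [Module.Finite K F]
    [Module.Finite O (integralClosure O F)] :
    IsPrincipalIdealRing (integralClosure O F) := by
  have := finite_primeSpectrum_of_finite_maximalSpectrum (O := O)
  have := integralClosure.isIntegrallyClosedOfFiniteExtension (R := O) K (L := F)
  have : IsNoetherianRing (integralClosure O F) := IsNoetherianRing.of_finite O _
  have : Ring.DimensionLEOne (integralClosure O F) := Ring.DimensionLEOne.of_isIntegral O _
  have : IsDedekindDomain (integralClosure O F) := {}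
  have := Algebra.QuasiFinite.finite_primeSpectrum O (integralClosure O F)
  exact IsPrincipalIdealRing.of_finite_primes
    ((Set.finite_range PrimeSpectrum.asIdeal).subset fun P hP ↦ ⟨⟨P, hP⟩, rfl⟩)

theorem hasInvariantFactors_of_isIntegralClosure [IsDedekindDomain O] [Finite (MaximalSpectrum O)]
    (K E : Type*) [Field K] [Algebra O K] [IsFractionRing O K] [CommRing E] [IsReduced E]
    [Algebra O E] [Algebra K E] [IsScalarTower O K E] [Module.Finite K E]
    {A : Type*} [CommRing A] [Algebra O A] [Algebra A E] [IsScalarTower O A E]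
    [IsIntegralClosure A O E] [Module.Finite O A]
    (M : Type*) [AddCommGroup M] [Module A M] [Module.Finite A M] : HasInvariantFactors A M := by
  have : IsArtinianRing E := isArtinian_of_tower K inferInstance
  let (m : MaximalSpectrum E) : Field (E ⧸ m.asIdeal) := Ideal.Quotient.field m.asIdeal
  let D (m : MaximalSpectrum E) := integralClosure O (E ⧸ m.asIdeal)
  let e : A ≃ₐ[O] ∀ m, D m :=
    (IsIntegralClosure.equiv O A E (integralClosure O E)).trans <|
      ((IsArtinianRing.equivPi E).restrictScalars O).mapIntegralClosure.trans <|
        integralClosurePiEquiv O _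
  have (m : MaximalSpectrum E) : Module.Finite O (D m) :=
    Module.Finite.of_surjective ((LinearMap.proj m).comp e.toLinearMap)
      ((Function.surjective_eval m).comp e.surjective)
  have (m : MaximalSpectrum E) : IsPrincipalIdealRing (D m) :=
    isPrincipalIdealRing_integralClosure K (E ⧸ m.asIdeal)
  let (m : MaximalSpectrum E) : Algebra A (D m) :=
    ((Pi.evalRingHom (fun m ↦ D m) m).comp e.toRingHom).toAlgebra
  exact hasInvariantFactors_of_bijective_algebraMap_pi (fun m ↦ D m) e.bijective
    fun m ↦ hasInvariantFactors_of_isPrincipalIdealRing _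

end IntegralClosure

section GroupAlgebra

theorem trace_monoidAlgebra_apply {K G : Type*} [CommRing K] [CommGroup G] [Finite G]
    (x : MonoidAlgebra K G) :
    Algebra.trace K (MonoidAlgebra K G) x = Nat.card G * x.coeff 1 := by
  classical
  have := Fintype.ofFinite G
  simp [Algebra.trace_eq_matrix_trace (MonoidAlgebra.basis G K), Matrix.trace,
    Algebra.leftMulMatrix_eq_repr_mul, MonoidAlgebra.basis]

open scoped AlgebraMonoidAlgebra

variable {O K G : Type*} [CommRing O] [Field K] [Algebra O K] [CommGroup G] [Finite G]

theorem isIntegral_coeff_monoidAlgebra (hG : IsUnit (Nat.card G : O)) {x : MonoidAlgebra K G}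
    (hx : IsIntegral O x) (g : G) : IsIntegral O (x.coeff g) := by
  have hsingle : IsIntegral O (MonoidAlgebra.single g⁻¹ (1 : K)) := by
    refine IsIntegral.of_pow (Nat.card_pos (α := G)) ?_
    rw [MonoidAlgebra.single_pow, pow_card_eq_one', one_pow]
    exact isIntegral_one
  have htrace := isIntegral_algebra_trace (K := K) (hx.mul hsingle)
  obtain ⟨u, hu⟩ := hG
  have hcoeff : x.coeff g =
      (↑u⁻¹ : O) • Algebra.trace K (MonoidAlgebra K G) (x * MonoidAlgebra.single g⁻¹ 1) := by
    rw [trace_monoidAlgebra_apply, ← map_natCast (algebraMap O K), ← hu, ← Algebra.smul_def,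
      smul_smul, Units.inv_mul, one_smul]
    simp
  rw [hcoeff]
  exact htrace.smul _

theorem isIntegralClosure_monoidAlgebra [FaithfulSMul O K] [IsIntegrallyClosedIn O K]
    (hG : IsUnit (Nat.card G : O)) :
    IsIntegralClosure (MonoidAlgebra O G) O (MonoidAlgebra K G) where
  algebraMap_injective :=
    MonoidAlgebra.map_injective _ (FaithfulSMul.algebraMap_injective O K)
  isIntegral_iff {x} := by
    refine ⟨fun hx ↦ ?_, ?_⟩
    · change x ∈ Set.range (MonoidAlgebra.map (algebraMap O K : O →+ K))
      rw [MonoidAlgebra.range_map]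
      exact fun g ↦
        IsIntegrallyClosedIn.isIntegral_iff.mp (isIntegral_coeff_monoidAlgebra hG hx g)
    · rintro ⟨y, rfl⟩
      exact (Algebra.IsIntegral.isIntegral y).algebraMap

theorem stmt8_general [IsDedekindDomain O] [Finite (MaximalSpectrum O)]
    (hG : IsUnit (Nat.card G : O)) {M : Type*} [AddCommGroup M]
    [Module (MonoidAlgebra O G) M] [Module.Finite (MonoidAlgebra O G) M] :
    HasInvariantFactors (MonoidAlgebra O G) M := by
  let K := FractionRing O
  have hcard : IsUnit (Nat.card G : K) := by
    simpa only [map_natCast] using hG.map (algebraMap O K)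
  have : NeZero (Nat.card G : K) := ⟨hcard.ne_zero⟩
  have := isIntegralClosure_monoidAlgebra (K := K) hG
  exact hasInvariantFactors_of_isIntegralClosure (O := O) K (MonoidAlgebra K G) M

end GroupAlgebra

theorem isUnit_natCast_padicInt {p : ℕ} [Fact p.Prime] {n : ℕ} (hn : ¬ p ∣ n) :
    IsUnit (n : ℤ_[p]) := by
  rw [PadicInt.isUnit_iff, PadicInt.norm_natCast_eq_one_iff]
  exact ((Fact.out : p.Prime).coprime_iff_not_dvd).mpr hn

/-- Let `p` be a prime and `G` a finite abelian group of order coprime to `p`.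
Then every finitely generated `ℤ_p[G]`-module `M` is isomorphic to a finite direct sum
`⊕_{i=1}^{t} ℤ_p[G]/I_i` for some increasing chain of ideals `I_1 ⊆ I_2 ⊆ ⋯ ⊆ I_t` of
`ℤ_p[G]`. -/
theorem stmt8 (p : ℕ) [Fact p.Prime] (G : Type) [CommGroup G] [Fintype G]
    (hG : ¬ p ∣ Fintype.card G)
    (M : Type) [AddCommGroup M] [Module (MonoidAlgebra ℤ_[p] G) M]
    [Module.Finite (MonoidAlgebra ℤ_[p] G) M] :
    ∃ (t : ℕ) (I : Fin t → Ideal (MonoidAlgebra ℤ_[p] G)),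
      (∀ i j : Fin t, i ≤ j → I i ≤ I j) ∧
      Nonempty (M ≃ₗ[MonoidAlgebra ℤ_[p] G] ∀ i : Fin t, MonoidAlgebra ℤ_[p] G ⧸ I i) := by
  have hunit : IsUnit (Nat.card G : ℤ_[p]) :=
    isUnit_natCast_padicInt (by rwa [Nat.card_eq_fintype_card])
  obtain ⟨t, I, hI, e⟩ := stmt8_general (M := M) hunit
  exact ⟨t, I, fun _ _ hij ↦ hI hij, e⟩
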